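/- arXiv:2512.18222 — 3 statements merged into one kernel-verified Lean document; each statement's English description precedes it below -/
import Mathlib

section
/- Let ε > 0, p ∈ ℝ³, and let μ be a symmetric probability measure on ℝ³ supported in the closed ball of radius ε around the origin. Let S : ℝ³ → ℝ be twice continuously differentiable with S ≥ 0 everywhere and ‖D²S(x)‖ ≤ H for all x in the closed ball of radius ε around p. Let δ₁, …, δ₇ be the seven stencil points {0, ±ε·e₁, ±ε·e₂, ±ε·e₃}. Then |log(1 + ∫ S(p + δ) dμ(δ)) − log(1 + (1/7) · ∑_{m=1}^{7} S(p + δ_m))| ≤ (1/2 + 3/7) · H · ε². -/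
open MeasureTheory Metric

/-- The symmetric 7-point stencil `{0, ±ε e₁, ±ε e₂, ±ε e₃}` in ℝ³. -/
noncomputable def stencil (ε : ℝ) : Fin 7 → EuclideanSpace ℝ (Fin 3) :=
  ![0, ε • EuclideanSpace.single 0 1, -(ε • EuclideanSpace.single 0 1),
    ε • EuclideanSpace.single 1 1, -(ε • EuclideanSpace.single 1 1),
    ε • EuclideanSpace.single 2 1, -(ε • EuclideanSpace.single 2 1)]

/-!
The first-order Taylor remainder of `S` at `p` is at most `H / 2 * ‖δ‖ ^ 2` for a displacement `δ`,
and the linear Taylor term averages to zero over any centred displacement. So averaging `S (p + δ)`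
over `δ` moves the value `S p` by at most `H / 2` times the second moment of `δ`. That moment is at
most `ε ^ 2` for the kernel `μ` and equals `6 / 7 * ε ^ 2` for the stencil, whence the constant
`1 / 2 + 3 / 7`; since `log` is 1-Lipschitz on `[1, ∞)`, the bound survives the surrogate cost.
-/

section Taylor

variable {E F : Type*} [NormedAddCommGroup E] [NormedSpace ℝ E] [NormedAddCommGroup F]
  [NormedSpace ℝ F] {f : E → F} {s : Set E} {x y v : E} {H : ℝ}

lemma norm_fderiv_sub_fderiv_le_of_norm_iteratedFDeriv_two_le (hs : Convex ℝ s)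
    (hf : ∀ z ∈ s, ContDiffAt ℝ 2 f z) (hH : ∀ z ∈ s, ‖iteratedFDeriv ℝ 2 f z‖ ≤ H)
    (hx : x ∈ s) (hy : y ∈ s) : ‖fderiv ℝ f y - fderiv ℝ f x‖ ≤ H * ‖y - x‖ := by
  refine hs.norm_image_sub_le_of_norm_fderiv_le (𝕜 := ℝ) (fun z hz ↦ ?_) (fun z hz ↦ ?_) hx hy
  · exact ((hf z hz).fderiv_right (m := 1) (by norm_num)).differentiableAt one_ne_zero
  · rw [← norm_iteratedFDeriv_one, norm_iteratedFDeriv_fderiv]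
    exact hH z hz

lemma norm_taylor_remainder_le_of_norm_fderiv_sub_fderiv_le (hs : StarConvex ℝ x s)
    (hf : ∀ z ∈ s, DifferentiableAt ℝ f z)
    (hH : ∀ z ∈ s, ‖fderiv ℝ f z - fderiv ℝ f x‖ ≤ H * ‖z - x‖) (hxv : x + v ∈ s) :
    ‖f (x + v) - f x - fderiv ℝ f x v‖ ≤ H / 2 * ‖v‖ ^ 2 := by
  let g : ℝ → F := fun t ↦ f (x + t • v) - f x - t • fderiv ℝ f x v
  let g' : ℝ → F := fun t ↦ fderiv ℝ f (x + t • v) v - fderiv ℝ f x v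
  have hmem {t : ℝ} (ht : t ∈ Set.Ico 0 1) : x + t • v ∈ s :=
    hs.add_smul_mem hxv ht.1 ht.2.le
  have hg {t : ℝ} (ht : x + t • v ∈ s) : HasDerivAt g (g' t) t := by
    have hline : HasDerivAt (fun t : ℝ ↦ x + t • v) v t := by
      simpa using ((hasDerivAt_id t).smul_const v).const_add x
    exact ((((hf _ ht).hasFDerivAt.comp_hasDerivAt t hline).sub_const (f x)).sub
      ((hasDerivAt_id t).smul_const (fderiv ℝ f x v))).congr_deriv (by simp [g'])
  have hg' {t : ℝ} (ht : t ∈ Set.Ico 0 1) : ‖g' t‖ ≤ H * ‖v‖ ^ 2 * t := by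
    calc ‖g' t‖ = ‖(fderiv ℝ f (x + t • v) - fderiv ℝ f x) v‖ := rfl
      _ ≤ ‖fderiv ℝ f (x + t • v) - fderiv ℝ f x‖ * ‖v‖ := ContinuousLinearMap.le_opNorm _ _
      _ ≤ H * ‖x + t • v - x‖ * ‖v‖ := by gcongr; exact hH _ (hmem ht)
      _ = H * ‖v‖ ^ 2 * t := by
        rw [add_sub_cancel_left, norm_smul, Real.norm_of_nonneg ht.1]
        ring
  have hB (t : ℝ) : HasDerivAt (fun t ↦ H / 2 * ‖v‖ ^ 2 * t ^ 2) (H * ‖v‖ ^ 2 * t) t :=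
    ((hasDerivAt_pow 2 t).const_mul (H / 2 * ‖v‖ ^ 2)).congr_deriv (by norm_num; ring)
  have hcont : ContinuousOn g (Set.Icc 0 1) := fun t ht ↦
    (hg (hs.add_smul_mem hxv ht.1 ht.2)).continuousAt.continuousWithinAt
  have hle := image_norm_le_of_norm_deriv_right_le_deriv_boundary hcont
    (fun t ht ↦ (hg (hmem ht)).hasDerivWithinAt) (by simp [g]) hB (fun t ht ↦ hg' ht)
    (Set.right_mem_Icc.2 zero_le_one)
  simpa [g] using hle

lemma norm_taylor_remainder_le_of_norm_iteratedFDeriv_two_le (hs : Convex ℝ s)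
    (hf : ∀ z ∈ s, ContDiffAt ℝ 2 f z) (hH : ∀ z ∈ s, ‖iteratedFDeriv ℝ 2 f z‖ ≤ H)
    (hx : x ∈ s) (hxv : x + v ∈ s) :
    ‖f (x + v) - f x - fderiv ℝ f x v‖ ≤ H / 2 * ‖v‖ ^ 2 :=
  norm_taylor_remainder_le_of_norm_fderiv_sub_fderiv_le (hs.starConvex hx)
    (fun z hz ↦ (hf z hz).differentiableAt two_ne_zero)
    (fun _ hz ↦ norm_fderiv_sub_fderiv_le_of_norm_iteratedFDeriv_two_le hs hf hH hx hz) hxv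

end Taylor

section CentredAverage

variable {E F : Type*} [NormedAddCommGroup E] [NormedSpace ℝ E]
  [NormedAddCommGroup F] [NormedSpace ℝ F] {f : E → F} {s : Set E} {p : E} {H : ℝ}

theorem norm_integral_comp_add_sub_le_of_integral_eq_zero [CompleteSpace E] [CompleteSpace F]
    {Ω : Type*} [MeasurableSpace Ω] {P : Measure Ω} [IsProbabilityMeasure P] {X : Ω → E}
    (hs : Convex ℝ s) (hf : ∀ x ∈ s, ContDiffAt ℝ 2 f x)
    (hH : ∀ x ∈ s, ‖iteratedFDeriv ℝ 2 f x‖ ≤ H) (hp : p ∈ s)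
    (hXs : ∀ᵐ ω ∂P, p + X ω ∈ s) (hX : MemLp X 2 P) (hX0 : ∫ ω, X ω ∂P = 0)
    (hfX : AEStronglyMeasurable (fun ω ↦ f (p + X ω)) P) :
    ‖∫ ω, f (p + X ω) ∂P - f p‖ ≤ H / 2 * ∫ ω, ‖X ω‖ ^ 2 ∂P := by
  let L := fderiv ℝ f p
  have hXint : Integrable X P := hX.integrable one_le_two
  have hbound_int : Integrable (fun ω ↦ H / 2 * ‖X ω‖ ^ 2) P :=
    (hX.integrable_norm_pow two_ne_zero).const_mul _
  have hbound : ∀ᵐ ω ∂P, ‖f (p + X ω) - f p - L (X ω)‖ ≤ H / 2 * ‖X ω‖ ^ 2 := by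
    filter_upwards [hXs] with ω hω
    exact norm_taylor_remainder_le_of_norm_iteratedFDeriv_two_le hs hf hH hp hω
  have hLint : Integrable (fun ω ↦ L (X ω)) P := L.integrable_comp hXint
  have hRint : Integrable (fun ω ↦ f (p + X ω) - f p - L (X ω)) P :=
    hbound_int.mono' ((hfX.sub aestronglyMeasurable_const).sub hLint.aestronglyMeasurable) hbound
  have hL0 : ∫ ω, L (X ω) ∂P = 0 := by rw [L.integral_comp_comm hXint, hX0, map_zero]
  have hdiff_int : Integrable (fun ω ↦ f (p + X ω) - f p) P :=
    (hRint.add hLint).congr (.of_forall fun _ ↦ sub_add_cancel _ _)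
  have hfint : Integrable (fun ω ↦ f (p + X ω)) P :=
    (hdiff_int.add (integrable_const (f p))).congr (.of_forall fun _ ↦ sub_add_cancel _ _)
  calc ‖∫ ω, f (p + X ω) ∂P - f p‖ = ‖∫ ω, (f (p + X ω) - f p - L (X ω)) ∂P‖ := by
        rw [integral_sub hdiff_int hLint, hL0, sub_zero, integral_sub hfint (integrable_const _),
          integral_const, probReal_univ, one_smul]
    _ ≤ ∫ ω, H / 2 * ‖X ω‖ ^ 2 ∂P := norm_integral_le_of_norm_le hbound_int hbound
    _ = H / 2 * ∫ ω, ‖X ω‖ ^ 2 ∂P := integral_const_mul _ _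

theorem norm_sum_smul_comp_add_sub_le_of_sum_smul_eq_zero {ι : Type*} [Fintype ι] {w : ι → ℝ}
    {v : ι → E} (hs : Convex ℝ s) (hf : ∀ x ∈ s, ContDiffAt ℝ 2 f x)
    (hH : ∀ x ∈ s, ‖iteratedFDeriv ℝ 2 f x‖ ≤ H) (hp : p ∈ s) (hvs : ∀ i, p + v i ∈ s)
    (hw : ∀ i, 0 ≤ w i) (hw1 : ∑ i, w i = 1) (hv0 : ∑ i, w i • v i = 0) :
    ‖∑ i, w i • f (p + v i) - f p‖ ≤ H / 2 * ∑ i, w i * ‖v i‖ ^ 2 := by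
  let L := fderiv ℝ f p
  have hL0 : ∑ i, w i • L (v i) = 0 := by simp only [← map_smul, ← map_sum, hv0, map_zero]
  calc ‖∑ i, w i • f (p + v i) - f p‖ = ‖∑ i, w i • (f (p + v i) - f p - L (v i))‖ := by
        simp only [smul_sub, Finset.sum_sub_distrib, ← Finset.sum_smul, hw1, one_smul, hL0,
          sub_zero]
    _ ≤ ∑ i, w i * (H / 2 * ‖v i‖ ^ 2) := by
        refine norm_sum_le_of_le _ fun i _ ↦ ?_
        rw [norm_smul, Real.norm_of_nonneg (hw i)]
        exact mul_le_mul_of_nonneg_left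
          (norm_taylor_remainder_le_of_norm_iteratedFDeriv_two_le hs hf hH hp (hvs i)) (hw i)
    _ = H / 2 * ∑ i, w i * ‖v i‖ ^ 2 := by simp only [Finset.mul_sum, mul_left_comm]

end CentredAverage

section Kernel

variable {E F : Type*} [NormedAddCommGroup E] [NormedSpace ℝ E] [MeasurableSpace E] [BorelSpace E]
  {μ : Measure E}

lemma integral_id_eq_zero_of_map_neg_eq_self (hμ : μ.map (fun x ↦ -x) = μ) : ∫ x, x ∂μ = 0 := by
  have : μ.IsNegInvariant := ⟨hμ⟩
  have hneg : -∫ x, x ∂μ = ∫ x, x ∂μ := by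
    rw [← integral_neg, integral_neg_eq_self (fun x ↦ x) μ]
  have : IsAddTorsionFree E := .of_isTorsionFree ℝ E
  exact self_eq_neg.1 hneg.symm

theorem norm_integral_comp_add_sub_le_of_ae_mem_closedBall [CompleteSpace E]
    [SecondCountableTopology E] [NormedAddCommGroup F] [NormedSpace ℝ F] [CompleteSpace F]
    [IsProbabilityMeasure μ] {f : E → F} {p : E} {ε H : ℝ}
    (hμ : ∀ᵐ δ ∂μ, δ ∈ closedBall 0 ε) (hμ0 : ∫ δ, δ ∂μ = 0)
    (hf : ∀ x ∈ closedBall p ε, ContDiffAt ℝ 2 f x)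
    (hH : ∀ x ∈ closedBall p ε, ‖iteratedFDeriv ℝ 2 f x‖ ≤ H) :
    ‖∫ δ, f (p + δ) ∂μ - f p‖ ≤ H / 2 * ε ^ 2 := by
  have hnorm : ∀ᵐ δ ∂μ, ‖δ‖ ≤ ε := by simpa only [mem_closedBall_zero_iff] using hμ
  obtain ⟨δ₀, hδ₀⟩ := hnorm.exists
  have hp : p ∈ closedBall p ε := mem_closedBall_self ((norm_nonneg δ₀).trans hδ₀)
  have hH0 : 0 ≤ H := (norm_nonneg _).trans (hH p hp)
  have hmem {δ : E} (hδ : δ ∈ closedBall 0 ε) : p + δ ∈ closedBall p ε := by simpa using hδ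
  have hmeas : AEStronglyMeasurable (fun δ ↦ f (p + δ)) μ := by
    have hcont : ContinuousOn (fun δ ↦ f (p + δ)) (closedBall 0 ε) := fun δ hδ ↦
      ((hf _ (hmem hδ)).continuousAt.comp (by fun_prop)).continuousWithinAt
    rw [← Measure.restrict_eq_self_of_ae_mem hμ]
    exact hcont.aestronglyMeasurable measurableSet_closedBall
  have hmemLp : MemLp (fun δ : E ↦ δ) 2 μ := .of_bound (by fun_prop) ε hnorm
  have hsq : ∫ δ, ‖δ‖ ^ 2 ∂μ ≤ ε ^ 2 := by
    calc ∫ δ, ‖δ‖ ^ 2 ∂μ ≤ ∫ _, ε ^ 2 ∂μ := by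
          refine integral_mono_ae (hmemLp.integrable_norm_pow two_ne_zero) (integrable_const _) ?_
          filter_upwards [hnorm] with δ hδ
          gcongr
      _ = ε ^ 2 := by simp
  calc ‖∫ δ, f (p + δ) ∂μ - f p‖ ≤ H / 2 * ∫ δ, ‖δ‖ ^ 2 ∂μ :=
        norm_integral_comp_add_sub_le_of_integral_eq_zero (convex_closedBall p ε) hf hH hp
          (hμ.mono fun _ ↦ hmem) hmemLp hμ0 hmeas
    _ ≤ H / 2 * ε ^ 2 := by gcongr

end Kernel

lemma abs_log_sub_log_le_inv_mul {c x y : ℝ} (hc : 0 < c) (hx : c ≤ x) (hy : c ≤ y) :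
    |Real.log x - Real.log y| ≤ c⁻¹ * |x - y| := by
  have hpos {z : ℝ} (hz : z ∈ Set.Ici c) : 0 < z := hc.trans_le hz
  refine (convex_Ici c).norm_image_sub_le_of_norm_deriv_le
    (fun z hz ↦ Real.differentiableAt_log (hpos hz).ne') (fun z hz ↦ ?_) hy hx
  rw [Real.deriv_log, norm_inv, Real.norm_of_nonneg (hpos hz).le]
  exact inv_anti₀ hc hz

lemma sum_stencil (ε : ℝ) : ∑ m, stencil ε m = 0 := by
  simp [stencil, Fin.sum_univ_succ]

lemma norm_stencil_succ (ε : ℝ) (m : Fin 6) : ‖stencil ε m.succ‖ = |ε| := by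
  fin_cases m <;> simp [stencil, norm_smul]

lemma norm_stencil_le (ε : ℝ) (m : Fin 7) : ‖stencil ε m‖ ≤ |ε| := by
  cases m using Fin.cases with
  | zero => simp [stencil]
  | succ m => exact (norm_stencil_succ ε m).le

lemma sum_norm_sq_stencil (ε : ℝ) : ∑ m, ‖stencil ε m‖ ^ 2 = 6 * ε ^ 2 := by
  rw [Fin.sum_univ_succ]
  simp only [norm_stencil_succ]
  simp [stencil]

theorem stmt_7_general {E ι : Type*} [NormedAddCommGroup E] [NormedSpace ℝ E] [CompleteSpace E]
    [MeasurableSpace E] [BorelSpace E] [SecondCountableTopology E] [Fintype ι]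
    {ε : ℝ} {p : E} {μ : Measure E} [IsProbabilityMeasure μ]
    (hμ : ∀ᵐ δ ∂μ, δ ∈ closedBall 0 ε) (hμ0 : ∫ δ, δ ∂μ = 0)
    {w : ι → ℝ} {v : ι → E} (hw : ∀ i, 0 ≤ w i) (hw1 : ∑ i, w i = 1)
    (hv : ∀ i, v i ∈ closedBall 0 ε) (hv0 : ∑ i, w i • v i = 0)
    {S : E → ℝ} (hS : ∀ x ∈ closedBall p ε, ContDiffAt ℝ 2 S x)
    (hS0 : ∀ x ∈ closedBall p ε, 0 ≤ S x) {H : ℝ}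
    (hH : ∀ x ∈ closedBall p ε, ‖iteratedFDeriv ℝ 2 S x‖ ≤ H) :
    |Real.log (1 + ∫ δ, S (p + δ) ∂μ) - Real.log (1 + ∑ i, w i * S (p + v i))| ≤
      H / 2 * (ε ^ 2 + ∑ i, w i * ‖v i‖ ^ 2) := by
  have hmem {δ : E} (hδ : δ ∈ closedBall 0 ε) : p + δ ∈ closedBall p ε := by simpa using hδ
  obtain ⟨δ₀, hδ₀⟩ := hμ.exists
  have hp : p ∈ closedBall p ε := mem_closedBall_self (nonempty_closedBall.1 ⟨δ₀, hδ₀⟩)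
  have hkernel := norm_integral_comp_add_sub_le_of_ae_mem_closedBall hμ hμ0 hS hH
  have hstencil := norm_sum_smul_comp_add_sub_le_of_sum_smul_eq_zero (convex_closedBall p ε)
    hS hH hp (fun i ↦ hmem (hv i)) hw hw1 hv0
  have hA0 : 0 ≤ ∫ δ, S (p + δ) ∂μ :=
    integral_nonneg_of_ae (hμ.mono fun δ hδ ↦ hS0 _ (hmem hδ))
  have hB0 : 0 ≤ ∑ i, w i * S (p + v i) :=
    Finset.sum_nonneg fun i _ ↦ mul_nonneg (hw i) (hS0 _ (hmem (hv i)))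
  rw [Real.norm_eq_abs] at hkernel
  simp only [smul_eq_mul, Real.norm_eq_abs] at hstencil
  rw [abs_sub_comm] at hstencil
  set A := ∫ δ, S (p + δ) ∂μ
  set B := ∑ i, w i * S (p + v i)
  calc |Real.log (1 + A) - Real.log (1 + B)| ≤ |A - B| := by
        simpa using abs_log_sub_log_le_inv_mul one_pos (le_add_of_nonneg_right hA0)
          (le_add_of_nonneg_right hB0)
    _ ≤ |A - S p| + |S p - B| := abs_sub_le _ _ _
    _ ≤ H / 2 * (ε ^ 2 + ∑ i, w i * ‖v i‖ ^ 2) := by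
        rw [mul_add]
        exact add_le_add hkernel hstencil

/-- Quadratic discretization error at the level of the surrogate capacity
`log (1 + ·)`: for a nonnegative `C²` SNR field `S` with Hessian bound `H` on the
ε-ball around `p`, and a symmetric probability kernel supported in the ε-ball,
the surrogate costs built from the continuous and discrete smoothed SNR differ by
at most `(1/2 + 3/7)·H·ε²`. The logarithm is the natural logarithm. -/
theorem stmt_7 (ε : ℝ) (hε : 0 < ε) (p : EuclideanSpace ℝ (Fin 3))
    (μ : Measure (EuclideanSpace ℝ (Fin 3))) [IsProbabilityMeasure μ]
    (hsupp : μ (closedBall (0 : EuclideanSpace ℝ (Fin 3)) ε)ᶜ = 0)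
    (hsymm : μ.map (fun x => -x) = μ)
    (S : EuclideanSpace ℝ (Fin 3) → ℝ) (hS : ContDiff ℝ 2 S)
    (hS0 : ∀ x, 0 ≤ S x) (H : ℝ)
    (hH : ∀ x ∈ closedBall p ε, ‖iteratedFDeriv ℝ 2 S x‖ ≤ H) :
    |Real.log (1 + ∫ δ, S (p + δ) ∂μ) -
        Real.log (1 + (1 / 7 : ℝ) * ∑ m : Fin 7, S (p + stencil ε m))| ≤
      (1 / 2 + 3 / 7) * H * ε ^ 2 := by
  have hball (m : Fin 7) : stencil ε m ∈ closedBall 0 ε := by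
    simpa [abs_of_pos hε] using norm_stencil_le ε m
  have hbound := stmt_7_general (w := fun _ ↦ 1 / 7) (mem_ae_iff.2 hsupp)
    (integral_id_eq_zero_of_map_neg_eq_self hsymm) (fun _ ↦ by norm_num) (by norm_num) hball
    (by rw [← Finset.smul_sum, sum_stencil, smul_zero])
    (fun x _ ↦ hS.contDiffAt) (fun x _ ↦ hS0 x) hH
  rw [← Finset.mul_sum, ← Finset.mul_sum, sum_norm_sq_stencil] at hbound
  exact hbound.trans_eq (by ring)
end

section
/- Let n ≥ 1, ε > 0, σ > 0, c ≥ 0, and let f, g : ℝⁿ → ℝ be twice continuously differentiable functions satisfying, for all x ∈ ℝⁿ: 0 ≤ f(x) ≤ F, 0 ≤ g(x) ≤ G, ‖∇f(x)‖ ≤ a₁/ε, ‖D²f(x)‖ ≤ a₂/ε², ‖∇g(x)‖ ≤ b₁/σ, ‖D²g(x)‖ ≤ b₂/σ², where F, G, a₁, a₂, b₁, b₂ ≥ 0. Define h(x) = log(1 + c·f(x)·g(x)) (natural logarithm) and K = c·(F·b₂ + G·a₂ + a₁·b₁) + 2c²·(F²·b₁² + G²·a₁²). Then ‖D²h(x)‖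 ≤ K·(ε⁻² + σ⁻²) for all x, and hence ∇h is Lipschitz continuous on ℝⁿ with Lipschitz constant L_grad = K·(ε⁻² + σ⁻²). -/
/-!
With `u = c * f * g`, one has `D² log (1 + u) = D²u / (1 + u) - (Du ⊗ Du) / (1 + u)²`. Since
`0 ≤ u`, both denominators are at least `1`, and the Leibniz rule bounds `Du` and `D²u`. Writing
`s = ε⁻¹` and `t = σ⁻¹`, the mixed products of the two scales are absorbed by
`2 * s * t ≤ s² + t²` in the Hessian of `u` and by `(p + q)² ≤ 2 * (p² + q²)` in `‖Du‖²`.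
The mean value inequality applied to the derivative then gives the Lipschitz bound.
-/

section NormedSpace

variable {𝕜 E F G : Type*} [NontriviallyNormedField 𝕜] [NormedAddCommGroup E] [NormedSpace 𝕜 E]
  [NormedAddCommGroup F] [NormedSpace 𝕜 F] [NormedAddCommGroup G] [NormedSpace 𝕜 G]

theorem norm_fderiv_fderiv (f : E → F) (x : E) :
    ‖fderiv 𝕜 (fderiv 𝕜 f) x‖ = ‖iteratedFDeriv 𝕜 2 f x‖ := by
  rw [← norm_iteratedFDeriv_one, norm_iteratedFDeriv_fderiv]

theorem fderiv_fderiv_comp {φ : F → G} {w : E → F} {x : E} (hφ : ContDiffAt 𝕜 2 φ (w x))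
    (hw : ContDiffAt 𝕜 2 w x) :
    fderiv 𝕜 (fderiv 𝕜 (φ ∘ w)) x =
      ContinuousLinearMap.compL 𝕜 E F G (fderiv 𝕜 φ (w x)) ∘SL fderiv 𝕜 (fderiv 𝕜 w) x +
        (ContinuousLinearMap.compL 𝕜 E F G).flip (fderiv 𝕜 w x) ∘SL
          (fderiv 𝕜 (fderiv 𝕜 φ) (w x) ∘SL fderiv 𝕜 w x) := by
  have chain_rule : fderiv 𝕜 (φ ∘ w) =ᶠ[nhds x] fun y ↦ fderiv 𝕜 φ (w y) ∘SL fderiv 𝕜 w y := by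
    filter_upwards [hw.eventually (by simp),
      hw.continuousAt.eventually (hφ.eventually (by simp))] with y hwy hφy
    exact fderiv_comp y (hφy.differentiableAt two_ne_zero) (hwy.differentiableAt two_ne_zero)
  have hDw : DifferentiableAt 𝕜 (fderiv 𝕜 w) x :=
    (hw.fderiv_right one_add_one_eq_two.le).differentiableAt one_ne_zero
  have hDφ : DifferentiableAt 𝕜 (fderiv 𝕜 φ) (w x) :=
    (hφ.fderiv_right one_add_one_eq_two.le).differentiableAt one_ne_zero
  have hDφw := hDφ.hasFDerivAt.comp x (hw.differentiableAt two_ne_zero).hasFDerivAt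
  rw [chain_rule.fderiv_eq]
  exact (hDφw.clm_comp hDw.hasFDerivAt).fderiv

theorem norm_iteratedFDeriv_two_comp_le {φ : F → G} {w : E → F} {x : E}
    (hφ : ContDiffAt 𝕜 2 φ (w x)) (hw : ContDiffAt 𝕜 2 w x) :
    ‖iteratedFDeriv 𝕜 2 (φ ∘ w) x‖ ≤
      ‖fderiv 𝕜 φ (w x)‖ * ‖iteratedFDeriv 𝕜 2 w x‖ +
        ‖iteratedFDeriv 𝕜 2 φ (w x)‖ * ‖fderiv 𝕜 w x‖ ^ 2 := by
  have norm_compL (A : F →L[𝕜] G) : ‖ContinuousLinearMap.compL 𝕜 E F G A‖ ≤ ‖A‖ :=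
    ContinuousLinearMap.norm_postcomp_le A
  have norm_compL_flip (B : E →L[𝕜] F) : ‖(ContinuousLinearMap.compL 𝕜 E F G).flip B‖ ≤ ‖B‖ :=
    ContinuousLinearMap.opNorm_le_bound _ (norm_nonneg B) fun A ↦
      (ContinuousLinearMap.opNorm_comp_le A B).trans_eq (mul_comm _ _)
  simp only [← norm_fderiv_fderiv]
  rw [fderiv_fderiv_comp hφ hw]
  refine (ContinuousLinearMap.opNorm_add_le _ _).trans (add_le_add ?_ ?_)
  · exact (ContinuousLinearMap.opNorm_comp_le _ _).trans (by gcongr; exact norm_compL _)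
  · calc
      _ ≤ ‖fderiv 𝕜 w x‖ * (‖fderiv 𝕜 (fderiv 𝕜 φ) (w x)‖ * ‖fderiv 𝕜 w x‖) := by
        refine (ContinuousLinearMap.opNorm_comp_le _ _).trans ?_
        gcongr
        exacts [norm_compL_flip _, ContinuousLinearMap.opNorm_comp_le _ _]
      _ = _ := by ring

theorem norm_fderiv_mul_le {A : Type*} [NormedRing A] [NormedAlgebra 𝕜 A] {f g : E → A} {x : E}
    (hf : DifferentiableAt 𝕜 f x) (hg : DifferentiableAt 𝕜 g x) :
    ‖fderiv 𝕜 (fun y ↦ f y * g y) x‖ ≤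
      ‖f x‖ * ‖fderiv 𝕜 g x‖ + ‖fderiv 𝕜 f x‖ * ‖g x‖ := by
  rw [fderiv_fun_mul' hf hg]
  refine (norm_add_le _ _).trans (add_le_add ?_ ?_)
  · refine ContinuousLinearMap.opNorm_le_bound _ (by positivity) fun v ↦ ?_
    calc
      ‖f x * fderiv 𝕜 g x v‖ ≤ ‖f x‖ * ‖fderiv 𝕜 g x v‖ := norm_mul_le _ _
      _ ≤ ‖f x‖ * (‖fderiv 𝕜 g x‖ * ‖v‖) := by gcongr; exact (fderiv 𝕜 g x).le_opNorm v
      _ = ‖f x‖ * ‖fderiv 𝕜 g x‖ * ‖v‖ := by ring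
  · refine ContinuousLinearMap.opNorm_le_bound _ (by positivity) fun v ↦ ?_
    calc
      ‖fderiv 𝕜 f x v * g x‖ ≤ ‖fderiv 𝕜 f x v‖ * ‖g x‖ := norm_mul_le _ _
      _ ≤ ‖fderiv 𝕜 f x‖ * ‖v‖ * ‖g x‖ := by gcongr; exact (fderiv 𝕜 f x).le_opNorm v
      _ = ‖fderiv 𝕜 f x‖ * ‖g x‖ * ‖v‖ := by ring

theorem norm_iteratedFDeriv_two_mul_le {A : Type*} [NormedRing A] [NormedAlgebra 𝕜 A]
    {f g : E → A} (hf : ContDiff 𝕜 2 f) (hg : ContDiff 𝕜 2 g) (x : E) :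
    ‖iteratedFDeriv 𝕜 2 (fun y ↦ f y * g y) x‖ ≤
      ‖f x‖ * ‖iteratedFDeriv 𝕜 2 g x‖ + 2 * ‖fderiv 𝕜 f x‖ * ‖fderiv 𝕜 g x‖ +
        ‖iteratedFDeriv 𝕜 2 f x‖ * ‖g x‖ := by
  simpa [Finset.sum_range_succ, norm_iteratedFDeriv_one] using
    norm_iteratedFDeriv_mul_le hf hg x le_rfl

end NormedSpace

section Real

variable {E F : Type*} [NormedAddCommGroup E] [NormedSpace ℝ E] [NormedAddCommGroup F]
  [NormedSpace ℝ F]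

theorem norm_iteratedFDeriv_two_log_le {w : E → ℝ} {x : E} (hw : ContDiffAt ℝ 2 w x)
    (hx : w x ≠ 0) :
    ‖iteratedFDeriv ℝ 2 (fun y ↦ Real.log (w y)) x‖ ≤
      ‖iteratedFDeriv ℝ 2 w x‖ / |w x| + (‖fderiv ℝ w x‖ / |w x|) ^ 2 := by
  have norm_deriv : ‖fderiv ℝ Real.log (w x)‖ = |w x|⁻¹ := by
    simp [← norm_deriv_eq_norm_fderiv]
  have norm_deriv_two : ‖iteratedFDeriv ℝ 2 Real.log (w x)‖ = (|w x| ^ 2)⁻¹ := by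
    simp [norm_iteratedFDeriv_eq_norm_iteratedDeriv, iteratedDeriv_succ']
  have hcomp := norm_iteratedFDeriv_two_comp_le (Real.contDiffAt_log.2 hx) hw
  rw [norm_deriv, norm_deriv_two] at hcomp
  exact hcomp.trans_eq (by ring)

theorem norm_iteratedFDeriv_two_log_one_add_le {u : E → ℝ} {x : E} (hu : ContDiffAt ℝ 2 u x)
    (hx : 0 ≤ u x) :
    ‖iteratedFDeriv ℝ 2 (fun y ↦ Real.log (1 + u y)) x‖ ≤
      ‖iteratedFDeriv ℝ 2 u x‖ + ‖fderiv ℝ u x‖ ^ 2 := by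
  have one_le : 1 ≤ |1 + u x| := le_abs.2 <| .inl <| le_add_of_nonneg_right hx
  have fderiv_one_add : fderiv ℝ (fun y ↦ 1 + u y) = fderiv ℝ u := funext fun _ ↦ fderiv_const_add 1
  have norm_hessian_one_add :
      ‖iteratedFDeriv ℝ 2 (fun y ↦ 1 + u y) x‖ = ‖iteratedFDeriv ℝ 2 u x‖ := by
    rw [← norm_fderiv_fderiv, fderiv_one_add, norm_fderiv_fderiv]
  refine (norm_iteratedFDeriv_two_log_le (contDiffAt_const.add hu) (by positivity)).trans ?_
  rw [fderiv_one_add, norm_hessian_one_add]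
  gcongr
  · exact div_le_self (norm_nonneg _) one_le
  · exact div_le_self (norm_nonneg _) one_le

theorem norm_iteratedFDeriv_two_log_one_add_mul_le {f g : E → ℝ} (hf : ContDiff ℝ 2 f)
    (hg : ContDiff ℝ 2 g) {c : ℝ} {x : E} (hx : 0 ≤ c * f x * g x) :
    ‖iteratedFDeriv ℝ 2 (fun y ↦ Real.log (1 + c * f y * g y)) x‖ ≤
      |c| * (‖f x‖ * ‖iteratedFDeriv ℝ 2 g x‖ + 2 * ‖fderiv ℝ f x‖ * ‖fderiv ℝ g x‖ +
        ‖iteratedFDeriv ℝ 2 f x‖ * ‖g x‖) +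
      c ^ 2 * (‖f x‖ * ‖fderiv ℝ g x‖ + ‖fderiv ℝ f x‖ * ‖g x‖) ^ 2 := by
  have hfg : ContDiff ℝ 2 fun y ↦ f y * g y := hf.mul hg
  have norm_fderiv_const_mul :
      ‖fderiv ℝ (fun y ↦ c * (f y * g y)) x‖ = |c| * ‖fderiv ℝ (fun y ↦ f y * g y) x‖ := by
    rw [fderiv_const_mul (hfg.differentiable two_ne_zero x), norm_smul, Real.norm_eq_abs]
  have norm_hessian_const_mul : ‖iteratedFDeriv ℝ 2 (fun y ↦ c * (f y * g y)) x‖ =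
      |c| * ‖iteratedFDeriv ℝ 2 (fun y ↦ f y * g y) x‖ := by
    simpa only [smul_eq_mul, norm_smul, Real.norm_eq_abs] using
      congrArg norm (iteratedFDeriv_const_smul_apply' (a := c) (hfg.contDiffAt (x := x)))
  simp only [mul_assoc c] at hx ⊢
  refine (norm_iteratedFDeriv_two_log_one_add_le
    (contDiff_const.mul hfg).contDiffAt hx).trans ?_
  rw [norm_fderiv_const_mul, norm_hessian_const_mul, mul_pow, sq_abs]
  gcongr
  · exact norm_iteratedFDeriv_two_mul_le hf hg x
  · exact norm_fderiv_mul_le (hf.differentiable two_ne_zero x) (hg.differentiable two_ne_zero x)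

theorem norm_fderiv_sub_fderiv_le_of_norm_iteratedFDeriv_two_le_s10 {f : E → F} {C : ℝ}
    (hf : Differentiable ℝ (fderiv ℝ f)) (hC : ∀ x, ‖iteratedFDeriv ℝ 2 f x‖ ≤ C) (x y : E) :
    ‖fderiv ℝ f x - fderiv ℝ f y‖ ≤ C * ‖x - y‖ :=
  convex_univ.norm_image_sub_le_of_norm_fderiv_le (fun z _ ↦ hf z)
    (fun z _ ↦ (norm_fderiv_fderiv f z).trans_le (hC z)) (Set.mem_univ y) (Set.mem_univ x)

end Real

section Gradient

variable {𝕜 E : Type*} [RCLike 𝕜] [NormedAddCommGroup E] [InnerProductSpace 𝕜 E]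
  [CompleteSpace E]

theorem norm_gradient (f : E → 𝕜) (x : E) : ‖gradient f x‖ = ‖fderiv 𝕜 f x‖ := by
  rw [← toDual_gradient, LinearIsometryEquiv.norm_map]

theorem norm_gradient_sub_gradient (f : E → 𝕜) (x y : E) :
    ‖gradient f x - gradient f y‖ = ‖fderiv 𝕜 f x - fderiv 𝕜 f y‖ := by
  simp_rw [← toDual_gradient, ← map_sub, LinearIsometryEquiv.norm_map]

end Gradient

theorem hessian_bound_le_mul_sq_add_sq {c F G a₁ a₂ b₁ b₂ : ℝ} (hc : 0 ≤ c) (hF : 0 ≤ F)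
    (hG : 0 ≤ G) (ha₁ : 0 ≤ a₁) (ha₂ : 0 ≤ a₂) (hb₁ : 0 ≤ b₁) (hb₂ : 0 ≤ b₂) (s t : ℝ) :
    c * (F * (b₂ * t ^ 2) + 2 * (a₁ * s) * (b₁ * t) + a₂ * s ^ 2 * G) +
        c ^ 2 * (F * (b₁ * t) + a₁ * s * G) ^ 2 ≤
      (c * (F * b₂ + G * a₂ + a₁ * b₁) + 2 * c ^ 2 * (F ^ 2 * b₁ ^ 2 + G ^ 2 * a₁ ^ 2)) *
        (s ^ 2 + t ^ 2) := by
  have hs : s ^ 2 ≤ s ^ 2 + t ^ 2 := le_add_of_nonneg_right (sq_nonneg t)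
  have ht : t ^ 2 ≤ s ^ 2 + t ^ 2 := le_add_of_nonneg_left (sq_nonneg s)
  have hst : 2 * s * t ≤ s ^ 2 + t ^ 2 := two_mul_le_add_sq s t
  calc
    _ ≤ c * (F * b₂ * t ^ 2 + a₁ * b₁ * (2 * s * t) + G * a₂ * s ^ 2) +
        c ^ 2 * (2 * ((F * (b₁ * t)) ^ 2 + (a₁ * s * G) ^ 2)) := by
      gcongr ?_ + c ^ 2 * ?_
      · exact le_of_eq (by ring)
      · exact add_sq_le
    _ = c * (F * b₂ * t ^ 2 + a₁ * b₁ * (2 * s * t) + G * a₂ * s ^ 2) +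
        2 * c ^ 2 * (F ^ 2 * b₁ ^ 2 * t ^ 2 + G ^ 2 * a₁ ^ 2 * s ^ 2) := by ring
    _ ≤ c * (F * b₂ * (s ^ 2 + t ^ 2) + a₁ * b₁ * (s ^ 2 + t ^ 2) + G * a₂ * (s ^ 2 + t ^ 2)) +
        2 * c ^ 2 * (F ^ 2 * b₁ ^ 2 * (s ^ 2 + t ^ 2) + G ^ 2 * a₁ ^ 2 * (s ^ 2 + t ^ 2)) := by
      gcongr
    _ = _ := by ring

theorem stmt_10_general {E : Type*} [NormedAddCommGroup E] [NormedSpace ℝ E] {ε σ c : ℝ}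
    (hε : 0 < ε) (hσ : 0 < σ) (hc : 0 ≤ c) {F G a₁ a₂ b₁ b₂ : ℝ} {f g : E → ℝ}
    (hf : ContDiff ℝ 2 f) (hg : ContDiff ℝ 2 g)
    (hf0 : ∀ x, 0 ≤ f x) (hfF : ∀ x, f x ≤ F) (hg0 : ∀ x, 0 ≤ g x) (hgG : ∀ x, g x ≤ G)
    (hDf : ∀ x, ‖fderiv ℝ f x‖ ≤ a₁ / ε) (hD2f : ∀ x, ‖iteratedFDeriv ℝ 2 f x‖ ≤ a₂ / ε ^ 2)
    (hDg : ∀ x, ‖fderiv ℝ g x‖ ≤ b₁ / σ) (hD2g : ∀ x, ‖iteratedFDeriv ℝ 2 g x‖ ≤ b₂ / σ ^ 2)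
    {K : ℝ} (hK : K = c * (F * b₂ + G * a₂ + a₁ * b₁) +
      2 * c ^ 2 * (F ^ 2 * b₁ ^ 2 + G ^ 2 * a₁ ^ 2)) :
    (∀ x, ‖iteratedFDeriv ℝ 2 (fun y ↦ Real.log (1 + c * f y * g y)) x‖ ≤
        K * (ε⁻¹ ^ 2 + σ⁻¹ ^ 2)) ∧
    (∀ x y, ‖fderiv ℝ (fun z ↦ Real.log (1 + c * f z * g z)) x -
        fderiv ℝ (fun z ↦ Real.log (1 + c * f z * g z)) y‖ ≤
        K * (ε⁻¹ ^ 2 + σ⁻¹ ^ 2) * ‖x - y‖) := by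
  have product_nonneg (x : E) : 0 ≤ c * f x * g x :=
    mul_nonneg (mul_nonneg hc (hf0 x)) (hg0 x)
  have hessian_le (x : E) : ‖iteratedFDeriv ℝ 2 (fun y ↦ Real.log (1 + c * f y * g y)) x‖ ≤
      K * (ε⁻¹ ^ 2 + σ⁻¹ ^ 2) := by
    have nonneg_of_le_div {N a r : ℝ} (hN : 0 ≤ N) (hr : 0 < r) (h : N ≤ a / r) : 0 ≤ a := by
      simpa only [zero_mul] using (le_div_iff₀ hr).1 (hN.trans h)
    have hF : 0 ≤ F := (hf0 x).trans (hfF x)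
    have hG : 0 ≤ G := (hg0 x).trans (hgG x)
    have ha₁ : 0 ≤ a₁ := nonneg_of_le_div (norm_nonneg _) hε (hDf x)
    have ha₂ : 0 ≤ a₂ := nonneg_of_le_div (norm_nonneg _) (pow_pos hε 2) (hD2f x)
    have hb₁ : 0 ≤ b₁ := nonneg_of_le_div (norm_nonneg _) hσ (hDg x)
    have hb₂ : 0 ≤ b₂ := nonneg_of_le_div (norm_nonneg _) (pow_pos hσ 2) (hD2g x)
    simp only [div_eq_mul_inv, ← inv_pow] at hDf hD2f hDg hD2g
    have hf_norm : ‖f x‖ ≤ F := (Real.norm_of_nonneg (hf0 x)).trans_le (hfF x)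
    have hg_norm : ‖g x‖ ≤ G := (Real.norm_of_nonneg (hg0 x)).trans_le (hgG x)
    refine (norm_iteratedFDeriv_two_log_one_add_mul_le hf hg (product_nonneg x)).trans ?_
    rw [abs_of_nonneg hc]
    calc
      _ ≤ c * (F * (b₂ * σ⁻¹ ^ 2) + 2 * (a₁ * ε⁻¹) * (b₁ * σ⁻¹) + a₂ * ε⁻¹ ^ 2 * G) +
          c ^ 2 * (F * (b₁ * σ⁻¹) + a₁ * ε⁻¹ * G) ^ 2 := by
        gcongr
        exacts [hD2g x, hDf x, hDg x, hD2f x, hDg x, hDf x]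
      _ ≤ _ := hK ▸ hessian_bound_le_mul_sq_add_sq hc hF hG ha₁ ha₂ hb₁ hb₂ ε⁻¹ σ⁻¹
  have hh : ContDiff ℝ 2 fun y ↦ Real.log (1 + c * f y * g y) :=
    (contDiff_const.add ((contDiff_const.mul hf).mul hg)).log fun x ↦
      (add_pos_of_pos_of_nonneg one_pos (product_nonneg x)).ne'
  have hDh := (hh.fderiv_right one_add_one_eq_two.le).differentiable one_ne_zero
  exact ⟨hessian_le, norm_fderiv_sub_fderiv_le_of_norm_iteratedFDeriv_two_le_s10 hDh hessian_le⟩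

/-- Explicit form of the paper's Theorem 1 (Lipschitz continuity of the cost
gradient): if the smoothed channel power `f` and the smoothed hybrid gain `g` are
nonnegative, bounded, with gradient/Hessian bounds scaling as `ε⁻¹, ε⁻²` and
`σ⁻¹, σ⁻²` respectively, then the surrogate cost `h = log (1 + c·f·g)` has Hessian
bounded by `K·(ε⁻² + σ⁻²)` and hence a globally Lipschitz gradient with constant
`L_grad = K·(ε⁻² + σ⁻²)`, where `K = c·(F·b₂ + G·a₂ + a₁·b₁) + 2c²·(F²·b₁² + G²·a₁²)`. -/
theorem stmt_10 (n : ℕ) (hn : 1 ≤ n) (ε σ c : ℝ) (hε : 0 < ε) (hσ : 0 < σ) (hc : 0 ≤ c)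
    (F G a₁ a₂ b₁ b₂ : ℝ) (hF : 0 ≤ F) (hG : 0 ≤ G) (ha₁ : 0 ≤ a₁) (ha₂ : 0 ≤ a₂)
    (hb₁ : 0 ≤ b₁) (hb₂ : 0 ≤ b₂)
    (f g : EuclideanSpace ℝ (Fin n) → ℝ) (hf : ContDiff ℝ 2 f) (hg : ContDiff ℝ 2 g)
    (hf0 : ∀ x, 0 ≤ f x) (hfF : ∀ x, f x ≤ F)
    (hg0 : ∀ x, 0 ≤ g x) (hgG : ∀ x, g x ≤ G)
    (hfg : ∀ x, ‖gradient f x‖ ≤ a₁ / ε) (hfh : ∀ x, ‖iteratedFDeriv ℝ 2 f x‖ ≤ a₂ / ε ^ 2)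
    (hgg : ∀ x, ‖gradient g x‖ ≤ b₁ / σ) (hgh : ∀ x, ‖iteratedFDeriv ℝ 2 g x‖ ≤ b₂ / σ ^ 2)
    (K : ℝ) (hK : K = c * (F * b₂ + G * a₂ + a₁ * b₁) + 2 * c ^ 2 * (F ^ 2 * b₁ ^ 2 + G ^ 2 * a₁ ^ 2)) :
    (∀ x, ‖iteratedFDeriv ℝ 2 (fun y => Real.log (1 + c * f y * g y)) x‖ ≤
        K * (ε⁻¹ ^ 2 + σ⁻¹ ^ 2)) ∧
    (∀ x y, ‖gradient (fun z => Real.log (1 + c * f z * g z)) x -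
        gradient (fun z => Real.log (1 + c * f z * g z)) y‖ ≤
        K * (ε⁻¹ ^ 2 + σ⁻¹ ^ 2) * ‖x - y‖) := by
  simp only [norm_gradient, norm_gradient_sub_gradient] at hfg hgg ⊢
  exact stmt_10_general hε hσ hc hf hg hf0 hfF hg0 hgG hfg hfh hgg hgh hK
end

section
/- Let E be a nonempty complete real inner product space (Hilbert space), N ≥ 1, λ > 0, L ≥ 0 with L/λ < 1. For each i ∈ Fin N let g_i : E × (Fin N → E) → E satisfy: (i) for every fixed x : Fin N → E, the map u ↦ g_i(u, x) is λ-strongly monotone, i.e. ⟨g_i(u, x) − g_i(u', x), u − u'⟩ ≥ λ·‖u − u'‖² for all u, u' ∈ E; (ii) for every fixed u ∈ E, the map x ↦ g_i(u, x) is L-Lipschitz with respect to the sup norm ‖x‖_∞ = max_j ‖x_j‖; (iii) for every x there exists a (necessarily unique) point BR_i(x) ∈ E with g_i(BR_i(x), x) = 0. Define the best-response map T : (Fin N → E) → (Fin N → E) by (T x)_i = BR_i(x). Then T is (L/λ)-Lipschitz in the sup norm, T has a unique fixed point x*, and the iterates x^{k+1} = T(x^k) satisfy ‖x^k − x*‖_∞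 ≤ (L/λ)^k · ‖x⁰ − x*‖_∞ for all k. -/
open scoped RealInnerProductSpace

open scoped NNReal

/-!
Strong monotonicity of `f` and Cauchy–Schwarz give `λ * ‖u - v‖ ≤ ‖f u - f v‖`. If `u` and `v` are
the best responses of one agent to `x` and `y`, so that `g u x = 0 = g v y`, then
`λ * ‖u - v‖ ≤ ‖g u x - g v x‖ = ‖g v y - g v x‖ ≤ L * ‖y - x‖`.
In the sup norm this bound passes from the individual agents to the whole profile, and Banach's
fixed point theorem applies.
-/

theorem lipschitzWith_of_forall_apply_eq {X Y Z : Type*} [PseudoEMetricSpace X]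
    [PseudoEMetricSpace Y] [PseudoEMetricSpace Z] {F : Y → X → Z} {K L : ℝ≥0} {s : X → Y} {c : Z}
    (hK : ∀ x, AntilipschitzWith K (F · x)) (hL : ∀ y, LipschitzWith L (F y))
    (hs : ∀ x, F (s x) x = c) : LipschitzWith (K * L) s := fun x y ↦
  calc
    edist (s x) (s y) ≤ K * edist (F (s x) x) (F (s y) x) := hK x (s x) (s y)
    _ = K * edist (F (s y) y) (F (s y) x) := by rw [hs x, hs y]
    _ ≤ K * (L * edist x y) := by
      rw [edist_comm x y]
      gcongr
      exact hL (s y) y x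
    _ = ↑(K * L) * edist x y := by rw [ENNReal.coe_mul, mul_assoc]

theorem dist_iterate_le_of_isFixedPt {X : Type*} [PseudoMetricSpace X] {f : X → X} {K : ℝ≥0}
    {p : X} (hf : LipschitzWith K f) (hp : Function.IsFixedPt f p) (x : X) (n : ℕ) :
    dist (f^[n] x) p ≤ K ^ n * dist x p := by
  simpa only [(hp.iterate n).eq, NNReal.coe_pow] using (hf.iterate n).dist_le_mul x p

section StronglyMonotone

variable {E : Type*} [SeminormedAddCommGroup E] [InnerProductSpace ℝ E]

/-- Strong monotonicity with modulus `c` of an operator `f` on a real inner product space, the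
property of an agent's gradient that makes its best response stable. -/
def IsStronglyMonotone (c : ℝ) (f : E → E) : Prop :=
  ∀ u v, c * ‖u - v‖ ^ 2 ≤ ⟪f u - f v, u - v⟫

theorem IsStronglyMonotone.mul_norm_sub_le {c : ℝ} {f : E → E} (hf : IsStronglyMonotone c f)
    (u v : E) : c * ‖u - v‖ ≤ ‖f u - f v‖ := by
  obtain huv | huv := (norm_nonneg (u - v)).eq_or_lt
  · simp only [← huv, mul_zero, norm_nonneg]
  · refine le_of_mul_le_mul_right ?_ huv
    calc
      c * ‖u - v‖ * ‖u - v‖ = c * ‖u - v‖ ^ 2 := by ring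
      _ ≤ ⟪f u - f v, u - v⟫ := hf u v
      _ ≤ ‖f u - f v‖ * ‖u - v‖ := real_inner_le_norm _ _

theorem IsStronglyMonotone.antilipschitzWith {c : ℝ≥0} (hc : 0 < c) {f : E → E}
    (hf : IsStronglyMonotone c f) : AntilipschitzWith c⁻¹ f :=
  AntilipschitzWith.of_le_mul_dist fun u v ↦ by
    rw [NNReal.coe_inv, dist_eq_norm, dist_eq_norm, le_inv_mul_iff₀ (NNReal.coe_pos.2 hc)]
    exact hf.mul_norm_sub_le u v

end StronglyMonotone

theorem lipschitzWith_bestResponse {ι : Type*} [Fintype ι] {E : ι → Type*}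
    [∀ i, SeminormedAddCommGroup (E i)] [∀ i, InnerProductSpace ℝ (E i)]
    {c L : ℝ≥0} (hc : 0 < c) {g : ∀ i, E i → (∀ j, E j) → E i}
    (hmono : ∀ i x, IsStronglyMonotone c (g i · x)) (hLip : ∀ i u, LipschitzWith L (g i u))
    {T : (∀ j, E j) → ∀ j, E j} (hT : ∀ x i, g i (T x i) x = 0) : LipschitzWith (L / c) T := by
  have agent (i : ι) : LipschitzWith (L / c) (T · i) := by
    rw [div_eq_inv_mul]
    exact lipschitzWith_of_forall_apply_eq (fun x ↦ (hmono i x).antilipschitzWith hc) (hLip i)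
      fun x ↦ hT x i
  exact fun x y ↦ edist_pi_le_iff.2 fun i ↦ agent i x y

theorem stmt_18_general {ι : Type*} [Fintype ι] {E : ι → Type*} [∀ i, NormedAddCommGroup (E i)]
    [∀ i, InnerProductSpace ℝ (E i)] [∀ i, CompleteSpace (E i)]
    (lam L : ℝ) (hlam : 0 < lam) (hL : 0 ≤ L) (hcontr : L / lam < 1)
    (g : ∀ i, E i → (∀ j, E j) → E i)
    (hmono : ∀ i x, IsStronglyMonotone lam (g i · x))
    (hLip : ∀ i u x x', ‖g i u x - g i u x'‖ ≤ L * ‖x - x'‖)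
    (T : (∀ j, E j) → ∀ j, E j) (hT : ∀ x i, g i (T x i) x = 0) :
    (∀ x y, ‖T x - T y‖ ≤ L / lam * ‖x - y‖) ∧
    ∃ xs, T xs = xs ∧ (∀ x', T x' = x' → x' = xs) ∧
      ∀ x₀ (k : ℕ), ‖T^[k] x₀ - xs‖ ≤ (L / lam) ^ k * ‖x₀ - xs‖ := by
  lift lam to ℝ≥0 using hlam.le
  lift L to ℝ≥0 using hL
  have lipschitz : LipschitzWith (L / lam) T := lipschitzWith_bestResponse (by exact_mod_cast hlam)
    hmono (fun i u ↦ lipschitzWith_iff_norm_sub_le.2 (hLip i u)) hT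
  have contracting : ContractingWith (L / lam) T := ⟨by exact_mod_cast hcontr, lipschitz⟩
  have fixed : T (contracting.fixedPoint T) = contracting.fixedPoint T :=
    contracting.fixedPoint_isFixedPt
  refine ⟨fun x y ↦ ?_, contracting.fixedPoint T, fixed,
    fun x' hx' ↦ contracting.fixedPoint_unique hx', fun x₀ k ↦ ?_⟩
  · simpa only [NNReal.coe_div] using lipschitz.norm_sub_le x y
  · simpa only [NNReal.coe_div, dist_eq_norm] using
      dist_iterate_le_of_isFixedPt lipschitz fixed x₀ k

/-- Contraction and linear convergence of the distributed best-response dynamics: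
if each agent's local gradient `g i` is `λ`-strongly monotone in the agent's own
variable and `L`-Lipschitz in the profile of all agents' variables (sup norm), with
`L/λ < 1`, then the best-response map `T` (sending a profile `x` to the profile of
zeros `BR i x` of `g i (·, x)`) is an `(L/λ)`-contraction in the sup norm, has a
unique fixed point `x*`, and the iterates converge linearly to it. -/
theorem stmt_18 {E : Type*} [NormedAddCommGroup E] [InnerProductSpace ℝ E]
    [CompleteSpace E] [Nonempty E] (N : ℕ) (hN : 1 ≤ N)
    (lam L : ℝ) (hlam : 0 < lam) (hL : 0 ≤ L) (hcontr : L / lam < 1)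
    (g : Fin N → E → (Fin N → E) → E)
    (hmono : ∀ (i : Fin N) (x : Fin N → E) (u u' : E),
      lam * ‖u - u'‖ ^ 2 ≤ ⟪g i u x - g i u' x, u - u'⟫)
    (hLip : ∀ (i : Fin N) (u : E) (x x' : Fin N → E),
      ‖g i u x - g i u x'‖ ≤ L * ‖x - x'‖)
    (BR : Fin N → (Fin N → E) → E)
    (hBR : ∀ (i : Fin N) (x : Fin N → E), g i (BR i x) x = 0)
    (T : (Fin N → E) → (Fin N → E)) (hT : ∀ x i, T x i = BR i x) :
    (∀ x y : Fin N → E, ‖T x - T y‖ ≤ L / lam * ‖x - y‖) ∧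
    ∃ xs : Fin N → E, T xs = xs ∧ (∀ x', T x' = x' → x' = xs) ∧
      ∀ (x₀ : Fin N → E) (k : ℕ), ‖T^[k] x₀ - xs‖ ≤ (L / lam) ^ k * ‖x₀ - xs‖ :=
  stmt_18_general lam L hlam hL hcontr g hmono hLip T fun x i ↦ by rw [hT, hBR]
end
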